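/- Let P be a monic quartic with roots r1, r2, r3, r4, all distinct, and let a(r) = a0 + a1 r + a2 r^2 + a3 r^3. Then the resultant R(a1,a2,a3) = Res_{a0}(B_{14}, N(α)) satisfies R = t_P · ∏_{1≤i<j≤4} (a(r_i) - a(r_j))^2 with t_P = ∏_{1≤i<j≤4} (r_i - r_j)^{-2}. In particular R = ∏_{1≤i<j≤4} ((a(r_i) - a(r_j))/(r_i - r_j))^2. -/

import Mathlib

/-!
Let `V` be the Vandermonde matrix of the roots `rᵢ` and put `bᵢ = a(rᵢ) - a₀`. Evaluation at the
roots gives `V M = D V` with `D = diag(a₀ + bᵢ)`. Hence `N(α) = det M = ∏ᵢ (a₀ + bᵢ)`, and also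
`V adj(M) = adj(D) V`. The last row of `V⁻¹` consists of the Lagrange nodal weights
`wᵢ = ∏_{j ≠ i} (rᵢ - rⱼ)⁻¹`, so `B₁₄ = ∑ᵢ wᵢ ∏_{j ≠ i} (a₀ + bⱼ)`. Its cubic term vanishes because
`∑ᵢ wᵢ = 0`, and at the root `a₀ = -bᵢ` of `N(α)` only the `i`-th summand survives, so that the
resultant is `∏ᵢ ∏_{j ≠ i} (bⱼ - bᵢ) / (rᵢ - rⱼ)`. The factors of `(i, j)` and `(j, i)` agree.
In degree `n + 2` the same argument applies, with the sign `(-1) ^ (n * (n + 2))` from exchanging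
the arguments of the resultant.
-/

open Polynomial Matrix

/-- The resultant of a quadratic polynomial `f` and a quartic polynomial `g`, as the
determinant of the 6×6 Sylvester matrix. -/
noncomputable def sylvResultant24 {R : Type*} [CommRing R] (f g : Polynomial R) : R :=
  Matrix.det !![f.coeff 2, f.coeff 1, f.coeff 0, 0, 0, 0;
                0, f.coeff 2, f.coeff 1, f.coeff 0, 0, 0;
                0, 0, f.coeff 2, f.coeff 1, f.coeff 0, 0;
                0, 0, 0, f.coeff 2, f.coeff 1, f.coeff 0;
                g.coeff 4, g.coeff 3, g.coeff 2, g.coeff 1, g.coeff 0, 0;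
                0, g.coeff 4, g.coeff 3, g.coeff 2, g.coeff 1, g.coeff 0]

/-- The cubic polynomial `a(r) = a0 + a1 r + a2 r^2 + a3 r^3`. -/
def cubicEval {F : Type*} [Field F] (a0 a1 a2 a3 r : F) : F :=
  a0 + a1 * r + a2 * r ^ 2 + a3 * r ^ 3

section Semiconj

variable {n R : Type*} [Fintype n] [DecidableEq n] [CommRing R] {V M D : Matrix n n R}

theorem det_eq_of_semiconjBy (hV : IsLeftRegular V.det) (h : SemiconjBy V M D) : M.det = D.det :=
  hV <| show V.det * M.det = V.det * D.det by rw [← det_mul, h.eq, det_mul, mul_comm]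

theorem semiconjBy_adjugate (hV : IsLeftRegular V.det) (h : SemiconjBy V M D) :
    SemiconjBy V M.adjugate D.adjugate := by
  have hadj : M.adjugate * V.adjugate = V.adjugate * D.adjugate := by
    rw [← adjugate_mul_distrib, ← adjugate_mul_distrib, h.eq]
  apply hV.matrix
  calc V.det • (V * M.adjugate)
      = V * (M.adjugate * V.adjugate) * V := by
        simp only [Matrix.mul_assoc, adjugate_mul, Matrix.mul_smul, Matrix.mul_one]
    _ = V.det • (D.adjugate * V) := by
        rw [hadj, ← Matrix.mul_assoc, mul_adjugate, Matrix.smul_mul, Matrix.one_mul,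
          Matrix.smul_mul]

end Semiconj

theorem semiconjBy_vandermonde_diagonal_eval {R : Type*} [CommRing R] {P : R[X]} {n : ℕ}
    {M : Matrix (Fin n) (Fin n) R} {p : R[X]}
    (hM : ∀ j : Fin n, AdjoinRoot.mk P p * AdjoinRoot.root P ^ (j : ℕ)
      = ∑ i : Fin n, algebraMap R (AdjoinRoot P) (M i j) * AdjoinRoot.root P ^ (i : ℕ))
    {x : Fin n → R} (hx : ∀ i, P.IsRoot (x i)) :
    SemiconjBy (vandermonde x) M (diagonal fun i ↦ p.eval (x i)) := by
  ext i j
  -- Evaluation at the root `x i` is a ring homomorphism out of `R[X] ⧸ (P)`, so the `i`-th row of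
  -- the Vandermonde matrix is a left eigenvector of `M`.
  have h := congrArg (AdjoinRoot.lift (RingHom.id R) (x i) (by simpa [eval₂_id] using hx i)) (hM j)
  simp only [map_mul, map_pow, map_sum, AdjoinRoot.lift_mk, AdjoinRoot.lift_root,
    AdjoinRoot.algebraMap_eq, AdjoinRoot.lift_of, RingHom.id_apply, eval₂_id] at h
  rw [diagonal_mul, mul_apply]
  simpa only [vandermonde_apply, mul_comm] using h.symm

section NodalWeight

open Finset Lagrange

variable {F : Type*} [Field F]

section

variable {ι : Type*} [DecidableEq ι] {s : Finset ι} {v : ι → F}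

theorem sum_nodalWeight_mul_eval (hv : Set.InjOn v s) {P : F[X]} (hP : P.degree < #s) :
    ∑ i ∈ s, nodalWeight s v i * P.eval (v i) = P.coeff (#s - 1) := by
  simp only [coeff_eq_sum hv hP, nodalWeight, prod_inv_distrib, div_eq_inv_mul]

theorem sum_nodalWeight_eq_zero (hv : Set.InjOn v s) (hs : 1 < #s) :
    ∑ i ∈ s, nodalWeight s v i = 0 := by
  have hdeg : (1 : F[X]).degree < #s := by
    rw [degree_one]
    exact_mod_cast hs.pos
  simpa [coeff_one, (Nat.sub_pos_of_lt hs).ne'] using sum_nodalWeight_mul_eval hv hdeg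

theorem natDegree_sum_nodalWeight_smul_prod_X_add_C_le (hv : Set.InjOn v s) (b : ι → F) :
    (∑ i ∈ s, nodalWeight s v i • ∏ j ∈ s.erase i, (X + C (b j))).natDegree ≤ #s - 2 := by
  have hmonic (i : ι) : (∏ j ∈ s.erase i, (X + C (b j))).Monic :=
    monic_prod_of_monic _ _ fun j _ ↦ monic_X_add_C (b j)
  have hdeg {i : ι} (hi : i ∈ s) : (∏ j ∈ s.erase i, (X + C (b j))).natDegree = #s - 1 := by
    simp [natDegree_prod_of_monic _ _ fun j _ ↦ monic_X_add_C (b j), card_erase_of_mem hi]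
  refine natDegree_le_iff_coeff_eq_zero.2 fun k hk ↦ ?_
  simp only [finsetSum_coeff, coeff_smul, smul_eq_mul]
  obtain rfl | hk' := eq_or_ne k (#s - 1)
  · rw [← sum_nodalWeight_eq_zero hv (by lia)]
    refine sum_congr rfl fun i hi ↦ ?_
    rw [← hdeg hi, (hmonic i).coeff_natDegree, mul_one]
  · refine sum_eq_zero fun i hi ↦ ?_
    rw [coeff_eq_zero_of_natDegree_lt (by rw [hdeg hi]; lia), mul_zero]

theorem eval_neg_sum_nodalWeight_smul_prod_X_add_C (v b : ι → F) {i : ι} (hi : i ∈ s) :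
    (∑ k ∈ s, nodalWeight s v k • ∏ j ∈ s.erase k, (X + C (b j))).eval (-b i)
      = ∏ j ∈ s.erase i, (b j - b i) / (v i - v j) := by
  simp only [eval_finsetSum, eval_smul, eval_prod, eval_add, eval_X, eval_C, smul_eq_mul]
  rw [sum_eq_single_of_mem i hi fun k _ hki ↦ ?_]
  · simp only [nodalWeight, ← prod_mul_distrib, div_eq_inv_mul, neg_add_eq_sub]
  · rw [prod_eq_zero (mem_erase.2 ⟨hki.symm, hi⟩) (neg_add_cancel _), mul_zero]

end

theorem isUnit_det_vandermonde_algebraMap {A : Type*} [CommRing A] [Algebra F A] {n : ℕ}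
    {r : Fin n → F} (hr : Function.Injective r) :
    IsUnit (vandermonde (algebraMap F A ∘ r)).det := by
  have h := (det_vandermonde_ne_zero_iff.2 hr).isUnit.map (algebraMap F A)
  simpa [det_vandermonde] using h

variable {n : ℕ} {r : Fin (n + 1) → F}

theorem nodalWeight_vecMul_vandermonde (hr : Function.Injective r) :
    nodalWeight univ r ᵥ* vandermonde r = Pi.single (Fin.last n) 1 := by
  ext k
  have hdeg : (X ^ (k : ℕ) : F[X]).degree < #(univ : Finset (Fin (n + 1))) := by
    rw [degree_X_pow, card_fin]
    exact_mod_cast k.is_lt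
  simpa [vecMul, dotProduct, coeff_X_pow, Pi.single_apply, Fin.ext_iff, eq_comm] using
    sum_nodalWeight_mul_eval hr.injOn hdeg

theorem adjugate_last_zero_eq_sum_nodalWeight_smul {A : Type*} [CommRing A] [Algebra F A]
    {M : Matrix (Fin (n + 1)) (Fin (n + 1)) A} {d : Fin (n + 1) → A}
    (hr : Function.Injective r)
    (h : SemiconjBy (vandermonde (algebraMap F A ∘ r)) M (diagonal d)) :
    M.adjugate (Fin.last n) 0 = ∑ i, nodalWeight univ r i • ∏ j ∈ univ.erase i, d j := by
  set V := vandermonde (algebraMap F A ∘ r)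
  set w := algebraMap F A ∘ nodalWeight univ r
  have hwV : w ᵥ* V = Pi.single (Fin.last n) 1 := by
    ext k
    have hk := congrArg (algebraMap F A) (congrFun (nodalWeight_vecMul_vandermonde hr) k)
    simpa [V, w, vecMul, dotProduct, Pi.single_apply, apply_ite (algebraMap F A)] using hk
  have hadj : V * M.adjugate = diagonal (fun i ↦ ∏ j ∈ univ.erase i, d j) * V := by
    rw [← adjugate_diagonal]
    exact semiconjBy_adjugate (isUnit_det_vandermonde_algebraMap hr).isRegular.left h
  calc M.adjugate (Fin.last n) 0
      = (w ᵥ* (V * M.adjugate)) 0 := by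
        rw [← vecMul_vecMul, hwV, single_one_vecMul, row_apply]
    _ = ∑ i, nodalWeight univ r i • ∏ j ∈ univ.erase i, d j := by
        rw [hadj]
        simp [vecMul, dotProduct, w, V, Algebra.smul_def, vandermonde_apply]

end NodalWeight

section Resultant

open Finset

theorem sylvResultant24_eq_resultant {R : Type*} [CommRing R] (f g : R[X]) :
    sylvResultant24 f g = f.resultant g 2 4 := by
  rw [sylvResultant24, resultant, ← det_transpose,
    ← det_submatrix_equiv_self (Fin.revPerm (n := 6)) (sylvester f g 2 4)]
  congr 1
  ext i j
  fin_cases i <;> fin_cases j <;> simp [sylvester, Fin.addCases]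

theorem resultant_prod_X_add_C_left {R ι : Type*} [CommRing R] {f : R[X]} {m : ℕ}
    (hf : f.natDegree ≤ m) (s : Finset ι) (b : ι → R) :
    (∏ i ∈ s, (X + C (b i))).resultant f #s m = ∏ i ∈ s, f.eval (-b i) := by
  nontriviality R
  have hcard : (∏ i ∈ s, (X + C (b i))).natDegree = #s := by
    simp [natDegree_prod_of_monic _ _ fun i _ ↦ monic_X_add_C (b i)]
  have hprod := resultant_prod_left s (fun i ↦ X + C (b i)) f m (by simp) hf
  simpa [hcard, hf] using hprod

theorem prod_prod_erase_div_eq_prod_prod_Ioi_sq {F ι : Type*} [Field F] [Fintype ι] [LinearOrder ι]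
    [LocallyFiniteOrderTop ι] [LocallyFiniteOrderBot ι] (r b : ι → F) :
    ∏ i, ∏ j ∈ univ.erase i, (b j - b i) / (r i - r j)
      = ∏ i, ∏ j ∈ Ioi i, ((b i - b j) / (r i - r j)) ^ 2 := by
  simp only [← compl_singleton,
    ← prod_prod_Ioi_mul_eq_prod_prod_off_diag fun j i ↦ (b j - b i) / (r i - r j)]
  refine prod_congr rfl fun i _ ↦ prod_congr rfl fun j _ ↦ ?_
  rw [← neg_sub (b i) (b j), ← neg_sub (r i) (r j), neg_div, div_neg, neg_mul_neg, sq]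

theorem resultant_adjugate_det_of_semiconjBy_vandermonde {F : Type*} [Field F] {n : ℕ}
    {r b : Fin (n + 2) → F} (hr : Function.Injective r)
    {M : Matrix (Fin (n + 2)) (Fin (n + 2)) F[X]}
    (hM : SemiconjBy (vandermonde (C ∘ r)) M (diagonal fun i ↦ X + C (b i))) :
    (M.adjugate (Fin.last (n + 1)) 0).resultant M.det n (n + 2)
      = (-1) ^ n * ∏ i, ∏ j ∈ Ioi i, ((b i - b j) / (r i - r j)) ^ 2 := by
  set B := M.adjugate (Fin.last (n + 1)) 0
  have hdet : M.det = ∏ i, (X + C (b i)) := by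
    rw [det_eq_of_semiconjBy (isUnit_det_vandermonde_algebraMap hr).isRegular.left hM,
      det_diagonal]
  have hB := adjugate_last_zero_eq_sum_nodalWeight_smul hr hM
  have hdeg : B.natDegree ≤ n := by
    simpa [B, hB] using natDegree_sum_nodalWeight_smul_prod_X_add_C_le (s := univ) hr.injOn b
  have heval (i : Fin (n + 2)) :
      B.eval (-b i) = ∏ j ∈ univ.erase i, (b j - b i) / (r i - r j) := by
    rw [← eval_neg_sum_nodalWeight_smul_prod_X_add_C r b (mem_univ i), ← hB]
  have hsign : (-1 : F) ^ (n * (n + 2)) = (-1) ^ n :=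
    neg_one_pow_congr (by simp [Nat.even_mul, Nat.even_add])
  calc B.resultant M.det n (n + 2)
      = (-1) ^ n * M.det.resultant B (n + 2) n := by rw [resultant_comm, hsign]
    _ = (-1) ^ n * ∏ i, B.eval (-b i) := by
        rw [hdet, ← resultant_prod_X_add_C_left hdeg univ b, card_fin]
    _ = (-1) ^ n * ∏ i, ∏ j ∈ Ioi i, ((b i - b j) / (r i - r j)) ^ 2 := by
        simp only [heval, prod_prod_erase_div_eq_prod_prod_Ioi_sq]

end Resultant

theorem prod_prod_Ioi_fin_four {N : Type*} [CommMonoid N] (f : Fin 4 → Fin 4 → N) :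
    ∏ i, ∏ j ∈ Finset.Ioi i, f i j
      = f 0 1 * f 0 2 * f 0 3 * f 1 2 * f 1 3 * f 2 3 := by
  simp [Fin.prod_univ_succ, Fin.prod_Ioi_succ, mul_assoc]

theorem resultant_B14_norm_factorization_general {F : Type*} [Field F] {n : ℕ}
    {r : Fin (n + 2) → F} (hr : Function.Injective r) {P : F[X]} (hP : ∀ i, P.IsRoot (r i))
    (a : F[X]) {M : Matrix (Fin (n + 2)) (Fin (n + 2)) F[X]}
    (hM : ∀ j : Fin (n + 2),
      AdjoinRoot.mk (P.map C) (C X + a.map C) * AdjoinRoot.root (P.map C) ^ (j : ℕ)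
        = ∑ i : Fin (n + 2), algebraMap F[X] (AdjoinRoot (P.map C)) (M i j)
            * AdjoinRoot.root (P.map C) ^ (i : ℕ)) :
    (M.adjugate (Fin.last (n + 1)) 0).resultant M.det n (n + 2)
      = (-1) ^ n * ∏ i, ∏ j ∈ Finset.Ioi i, ((a.eval (r i) - a.eval (r j)) / (r i - r j)) ^ 2 := by
  have hM' := semiconjBy_vandermonde_diagonal_eval hM (x := C ∘ r) fun i ↦ (hP i).map
  simp only [Function.comp_apply, eval_add, eval_C, eval_map, eval₂_at_apply] at hM'
  exact resultant_adjugate_det_of_semiconjBy_vandermonde hr hM'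

/-- Let `P` be a monic quartic over a field `F` with distinct roots
`r1, r2, r3, r4`, let `a(r) = a0 + a1 r + a2 r^2 + a3 r^3`, and let `M` be the matrix of
multiplication by `α = a0 + a1 r + a2 r^2 + a3 r^3` in the power basis of a root of `P`,
with `a0` an indeterminate. Then `R = Res_{a0}(B14, N(α))` satisfies
`R = tP ⬝ ∏_{i<j} (a(r_i) - a(r_j))^2` with `tP = ∏_{i<j} (r_i - r_j)⁻²`; in particular
`R = ∏_{i<j} ((a(r_i) - a(r_j))/(r_i - r_j))^2`. -/
theorem resultant_B14_norm_factorization (F : Type*) [Field F]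
    (c0 c1 c2 c3 a0 a1 a2 a3 : F) (r1 r2 r3 r4 : F)
    (hdist : r1 ≠ r2 ∧ r1 ≠ r3 ∧ r1 ≠ r4 ∧ r2 ≠ r3 ∧ r2 ≠ r4 ∧ r3 ≠ r4)
    (hfact : (X ^ 4 + C c3 * X ^ 3 + C c2 * X ^ 2 + C c1 * X + C c0 : F[X])
        = (X - C r1) * (X - C r2) * (X - C r3) * (X - C r4))
    (Pq : (Polynomial F)[X])
    (hPq : Pq = X ^ 4 + C (C c3) * X ^ 3 + C (C c2) * X ^ 2 + C (C c1) * X + C (C c0))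
    (M : Matrix (Fin 4) (Fin 4) (Polynomial F))
    (hM : ∀ j : Fin 4,
      (algebraMap (Polynomial F) (AdjoinRoot Pq) Polynomial.X
          + algebraMap (Polynomial F) (AdjoinRoot Pq) (C a1) * AdjoinRoot.root Pq
          + algebraMap (Polynomial F) (AdjoinRoot Pq) (C a2) * AdjoinRoot.root Pq ^ 2
          + algebraMap (Polynomial F) (AdjoinRoot Pq) (C a3) * AdjoinRoot.root Pq ^ 3)
        * AdjoinRoot.root Pq ^ (j : ℕ)
      = ∑ i : Fin 4,
          algebraMap (Polynomial F) (AdjoinRoot Pq) (M i j) * AdjoinRoot.root Pq ^ (i : ℕ)) :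
    sylvResultant24 (M.adjugate 3 0) M.det
      = ((r1 - r2) ^ 2 * (r1 - r3) ^ 2 * (r1 - r4) ^ 2 * (r2 - r3) ^ 2 * (r2 - r4) ^ 2
            * (r3 - r4) ^ 2)⁻¹
        * ((cubicEval a0 a1 a2 a3 r1 - cubicEval a0 a1 a2 a3 r2) ^ 2
            * (cubicEval a0 a1 a2 a3 r1 - cubicEval a0 a1 a2 a3 r3) ^ 2
            * (cubicEval a0 a1 a2 a3 r1 - cubicEval a0 a1 a2 a3 r4) ^ 2
            * (cubicEval a0 a1 a2 a3 r2 - cubicEval a0 a1 a2 a3 r3) ^ 2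
            * (cubicEval a0 a1 a2 a3 r2 - cubicEval a0 a1 a2 a3 r4) ^ 2
            * (cubicEval a0 a1 a2 a3 r3 - cubicEval a0 a1 a2 a3 r4) ^ 2) ∧
    sylvResultant24 (M.adjugate 3 0) M.det
      = ((cubicEval a0 a1 a2 a3 r1 - cubicEval a0 a1 a2 a3 r2) / (r1 - r2)) ^ 2
        * ((cubicEval a0 a1 a2 a3 r1 - cubicEval a0 a1 a2 a3 r3) / (r1 - r3)) ^ 2
        * ((cubicEval a0 a1 a2 a3 r1 - cubicEval a0 a1 a2 a3 r4) / (r1 - r4)) ^ 2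
        * ((cubicEval a0 a1 a2 a3 r2 - cubicEval a0 a1 a2 a3 r3) / (r2 - r3)) ^ 2
        * ((cubicEval a0 a1 a2 a3 r2 - cubicEval a0 a1 a2 a3 r4) / (r2 - r4)) ^ 2
        * ((cubicEval a0 a1 a2 a3 r3 - cubicEval a0 a1 a2 a3 r4) / (r3 - r4)) ^ 2 := by
  obtain rfl : Pq = (X ^ 4 + C c3 * X ^ 3 + C c2 * X ^ 2 + C c1 * X + C c0 : F[X]).map C := by
    simp [hPq]
  have hr : Function.Injective ![r1, r2, r3, r4] := by
    obtain ⟨h12, h13, h14, h23, h24, h34⟩ := hdist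
    simp [Fin.forall_fin_succ, Function.Injective, *, Ne.symm]
  have hroot (i : Fin 4) : (X ^ 4 + C c3 * X ^ 3 + C c2 * X ^ 2 + C c1 * X + C c0).IsRoot
      (![r1, r2, r3, r4] i) := by
    rw [hfact]
    fin_cases i <;> simp
  have hres := resultant_B14_norm_factorization_general hr hroot
    (C a1 * X + C a2 * X ^ 2 + C a3 * X ^ 3) (M := M) (by simpa [add_assoc] using hM)
  have hsub (x y : F) : eval x (C a1 * X + C a2 * X ^ 2 + C a3 * X ^ 3)
      - eval y (C a1 * X + C a2 * X ^ 2 + C a3 * X ^ 3)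
      = cubicEval a0 a1 a2 a3 x - cubicEval a0 a1 a2 a3 y := by
    simp [cubicEval, add_assoc]
  rw [← sylvResultant24_eq_resultant, prod_prod_Ioi_fin_four] at hres
  simp only [hsub, neg_one_sq, one_mul, cons_val] at hres
  refine ⟨hres.trans ?_, hres⟩
  rw [← div_eq_inv_mul]
  simp only [div_pow, div_mul_div_comm]
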